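/- In the diffusive regime 0 ≤ p < 3/4, the estimator is asymptotically normal: the law of √(log n)·(p̂_n − p) converges weakly to the centered Gaussian distribution with variance (3 − 4p)/4 (the inverse of the asymptotic Fisher information I(p) = 4/(3 − 4p)). -/

import Mathlib

open MeasureTheory ProbabilityTheory Filter Finset
open scoped BoundedContinuousFunction ENNReal NNReal Topology

noncomputable section

variable {Ω : Type*}

/-- Position of the elephant random walk: `S n = X 1 + ⋯ + X n`. -/
def erwS (X : ℕ → Ω → ℝ) (n : ℕ) (ω : Ω) : ℝ :=
  ∑ k ∈ Finset.Icc 1 n, X k ω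

/-- `V n = 4 ∑_{k=1}^{n-1} (S k / k)²`, the approximate conditional Fisher information. -/
def erwV (X : ℕ → Ω → ℝ) (n : ℕ) (ω : Ω) : ℝ :=
  4 * ∑ k ∈ Finset.Icc 1 (n - 1), (erwS X k ω / k) ^ 2

/-- The quasi-maximum likelihood estimator `p̂ n` of the memory parameter. -/
def erwPhat (X : ℕ → Ω → ℝ) (n : ℕ) (ω : Ω) : ℝ :=
  (∑ k ∈ Finset.Icc 1 (n - 1), (erwS X k ω / k) * (X (k + 1) ω + erwS X k ω / k)) /
    (2 * ∑ k ∈ Finset.Icc 1 (n - 1), (erwS X k ω / k) ^ 2)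

/-- The elephant random walk hypotheses with memory parameter `p ∈ [0,1]`:
the steps take values in `{-1, 1}`, are adapted to the filtration `ℱ`
(which plays the role of `σ(X_1, …, X_n)`), and
`E[X_{n+1} | ℱ_n] = (2p - 1) · S_n / n` almost surely. -/
def IsERW {m0 : MeasurableSpace Ω} (μ : Measure Ω) (ℱ : Filtration ℕ m0)
    (X : ℕ → Ω → ℝ) (p : ℝ) : Prop :=
  0 ≤ p ∧ p ≤ 1 ∧
  (∀ n, 1 ≤ n → ∀ ω, X n ω = 1 ∨ X n ω = -1) ∧
  (∀ n, 1 ≤ n → Measurable[ℱ n] (X n)) ∧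
  (∀ n, 1 ≤ n → μ[X (n + 1) | ℱ n] =ᵐ[μ] fun ω => (2 * p - 1) * (erwS X n ω / n))

/-!
The estimation error is `p̂ n - p = 2 * M n / V n`, where the score `M n` sums the martingale
differences `(S k / k) * ε k` with `ε k = X (k + 1) - (2 * p - 1) * S k / k`. Expanding
`S (k + 1) ^ 2` with `X (k + 1) ^ 2 = 1` writes `(3 - 4 * p) * (S k / k) ^ 2` as
`1 / k + 2 * (S k / k) * ε k` plus a telescoping increment and an error summable in `L¹`.
For `p < 3 / 4` the moments of `S k` of order two and four are `O(k)` and `O(k ^ 2)`, so both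
`V n / 4` and the sum of squares of the increments of `M n` are `log n / (3 - 4 * p)` up to errors
that are `O(√(log n))` in `L¹`. McLeish's martingale central limit theorem then applies to
`M n / √(log n)`, and Slutsky's lemma divides by `V n / log n`.

McLeish's theorem itself rests on the fact that `∏ (1 + i * ξ k)` has mean one for bounded
martingale differences `ξ k`, while it is close to `exp (i * ∑ ξ k) * exp (v / 2)` when the `ξ k`
are small and `∑ ξ k ^ 2` is close to `v`. Stopping the sum of squares keeps the product bounded.
-/

/-! ### Convergence in measure and in distribution -/

section ConvergenceInMeasure

variable {m0 : MeasurableSpace Ω} {μ : Measure Ω}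

theorem tendstoInMeasure_comp_const {ι E F : Type*} [PseudoMetricSpace E] [PseudoMetricSpace F]
    {f : ι → Ω → E} {l : Filter ι} {c : E} {g : E → F}
    (hf : TendstoInMeasure μ f l fun _ => c) (hg : ContinuousAt g c) :
    TendstoInMeasure μ (fun i ω => g (f i ω)) l fun _ => g c := by
  rw [tendstoInMeasure_iff_dist] at hf ⊢
  intro ε hε
  obtain ⟨η, hη, hgη⟩ := Metric.continuousAt_iff.1 hg ε hε
  refine tendsto_of_tendsto_of_tendsto_of_le_of_le tendsto_const_nhds (hf η hη)
    (fun _ => zero_le) fun i => measure_mono fun ω hω => ?_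
  by_contra! hlt
  exact absurd (hgη (not_le.1 hlt)) (not_lt.2 hω)

theorem tendstoInMeasure_of_integral_abs_sub_le {ι : Type*} {f : ι → Ω → ℝ} {g : Ω → ℝ}
    {l : Filter ι} {c : ι → ℝ} (hf : ∀ i, Integrable (f i) μ) (hg : Integrable g μ)
    (hle : ∀ᶠ i in l, ∫ ω, |f i ω - g ω| ∂μ ≤ c i) (hc : Tendsto c l (𝓝 0)) :
    TendstoInMeasure μ f l g := by
  refine tendstoInMeasure_of_tendsto_eLpNorm one_ne_zero (fun i => (hf i).aestronglyMeasurable)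
    hg.aestronglyMeasurable ?_
  have hint : Tendsto (fun i => ∫ ω, |f i ω - g ω| ∂μ) l (𝓝 0) :=
    squeeze_zero' (Eventually.of_forall fun i => integral_nonneg fun _ => abs_nonneg _) hle hc
  refine (ENNReal.ofReal_zero ▸ ENNReal.tendsto_ofReal hint).congr fun i => ?_
  rw [eLpNorm_one_eq_lintegral_enorm, ← ofReal_integral_norm_eq_lintegral_enorm ((hf i).sub hg)]
  rfl

theorem tendsto_integral_zero_of_tendstoInMeasure {ι E : Type*} [NormedAddCommGroup E]
    [NormedSpace ℝ E] [IsFiniteMeasure μ] {l : Filter ι} [l.IsCountablyGenerated] {f : ι → Ω → E}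
    {C : ℝ} (hf : ∀ i, AEStronglyMeasurable (f i) μ) (hC : ∀ᶠ i in l, ∀ ω, ‖f i ω‖ ≤ C)
    (hlim : TendstoInMeasure μ f l 0) :
    Tendsto (fun i => ∫ ω, f i ω ∂μ) l (𝓝 0) := by
  refine tendsto_of_subseq_tendsto fun ns hns => ?_
  obtain ⟨ms, hmono, hms⟩ := (hlim.comp hns).exists_seq_tendsto_ae
  refine ⟨ms, ?_⟩
  rw [← integral_zero Ω E (μ := μ)]
  refine tendsto_integral_filter_of_dominated_convergence (fun _ => C)
    (Eventually.of_forall fun _ => hf _) ?_ (integrable_const C) hms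
  filter_upwards [(hns.comp hmono.tendsto_atTop).eventually hC] with i hi
  exact Eventually.of_forall hi

theorem tendsto_integral_of_tendstoInDistribution {ι Ω' E : Type*} {m0 : MeasurableSpace Ω}
    {m' : MeasurableSpace Ω'} {μ : Measure Ω} [IsProbabilityMeasure μ] {μ' : Measure Ω'}
    [IsProbabilityMeasure μ'] [TopologicalSpace E] [MeasurableSpace E] [OpensMeasurableSpace E]
    {Y : ι → Ω → E} {l : Filter ι} {Z : Ω' → E}
    (h : TendstoInDistribution Y l Z (fun _ => μ) μ') (f : E →ᵇ ℝ) :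
    Tendsto (fun i => ∫ ω, f (Y i ω) ∂μ) l (𝓝 (∫ x, f x ∂(μ'.map Z))) := by
  refine (ProbabilityMeasure.tendsto_iff_forall_integral_tendsto.1 h.tendsto f).congr fun i => ?_
  exact integral_map (h.forall_aemeasurable i) f.continuous.measurable.aestronglyMeasurable

end ConvergenceInMeasure

/-! ### Expansion of the complex exponential -/

theorem norm_one_add_ofReal_mul_I_le (x : ℝ) :
    ‖(1 + x * Complex.I : ℂ)‖ ≤ Real.exp (x ^ 2 / 2) := by
  have hsq : ‖(1 + x * Complex.I : ℂ)‖ ^ 2 = x ^ 2 + 1 := by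
    rw [← Complex.normSq_eq_norm_sq, ← Complex.ofReal_one, Complex.normSq_add_mul_I]
    ring
  have hexp : Real.exp (x ^ 2 / 2) ^ 2 = Real.exp (x ^ 2) := by
    rw [← Real.exp_nat_mul]
    push_cast
    ring_nf
  refine le_of_sq_le_sq ?_ (Real.exp_pos _).le
  rw [hsq, hexp]
  exact Real.add_one_le_exp _

theorem norm_prod_one_add_ofReal_mul_I_le (x : ℕ → ℝ) (n : ℕ) :
    ‖∏ k ∈ range n, (1 + x k * Complex.I : ℂ)‖ ≤ Real.exp ((∑ k ∈ range n, x k ^ 2) / 2) := by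
  rw [norm_prod, sum_div, Real.exp_sum]
  exact prod_le_prod (fun _ _ => norm_nonneg _) fun k _ => norm_one_add_ofReal_mul_I_le (x k)

theorem norm_exp_mul_I_sub_one_add_mul_exp_le {x : ℝ} (hx : |x| ≤ 1) :
    ‖Complex.exp (x * Complex.I) - (1 + x * Complex.I) * Real.exp (-(x ^ 2) / 2)‖
      ≤ 2 * |x| ^ 3 := by
  set r : ℂ := Complex.exp (x * Complex.I) - (1 + x * Complex.I - x ^ 2 / 2) with hr
  set s : ℝ := Real.exp (-(x ^ 2) / 2) - 1 - -(x ^ 2) / 2 with hs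
  have hr_le : ‖r‖ ≤ |x| ^ 3 * (2 / 9) := by
    have h := Complex.exp_bound (x := x * Complex.I) (by simpa using hx) (n := 3) (by norm_num)
    have hsum : ∑ m ∈ range 3, ((x : ℂ) * Complex.I) ^ m / m.factorial
        = 1 + x * Complex.I - x ^ 2 / 2 := by
      simp [sum_range_succ, mul_pow]
      ring
    rw [hsum] at h
    refine h.trans (le_of_eq ?_)
    norm_num [Nat.factorial]
  have hs_le : |s| ≤ |x| ^ 3 / 4 := by
    have hx2 : ‖-(x ^ 2) / 2‖ = |x| ^ 2 / 2 := by simp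
    have h := Real.norm_exp_sub_one_sub_id_le (x := -(x ^ 2) / 2)
      (by rw [hx2]; nlinarith [abs_nonneg x])
    rw [hx2, Real.norm_eq_abs] at h
    nlinarith [pow_nonneg (abs_nonneg x) 3]
  have hsplit : Complex.exp (x * Complex.I) - (1 + x * Complex.I) * Real.exp (-(x ^ 2) / 2)
      = r + (x ^ 3 / 2 : ℝ) * Complex.I - s * (1 + x * Complex.I) := by
    rw [hr, hs]
    push_cast
    ring
  have hlin : ‖(1 + x * Complex.I : ℂ)‖ ≤ 2 := by
    refine (norm_add_le _ _).trans ?_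
    simp only [norm_one, norm_mul, Complex.norm_real, Complex.norm_I, mul_one, Real.norm_eq_abs]
    linarith
  rw [hsplit]
  calc ‖r + (x ^ 3 / 2 : ℝ) * Complex.I - s * (1 + x * Complex.I)‖
      ≤ ‖r‖ + ‖(x ^ 3 / 2 : ℝ) * Complex.I‖ + ‖s * (1 + x * Complex.I)‖ :=
        (norm_sub_le _ _).trans (by gcongr; exact norm_add_le _ _)
    _ ≤ |x| ^ 3 * (2 / 9) + |x| ^ 3 / 2 + |x| ^ 3 / 4 * 2 := by
        rw [norm_mul, norm_mul, Complex.norm_real, Complex.norm_real, Complex.norm_I, mul_one,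
          Real.norm_eq_abs, Real.norm_eq_abs, abs_div, abs_pow, abs_two]
        gcongr
    _ ≤ 2 * |x| ^ 3 := by linarith [pow_nonneg (abs_nonneg x) 3]

theorem norm_prod_sub_prod_le_sum {𝕜 : Type*} [NormedCommRing 𝕜] [NormOneClass 𝕜] {a b : ℕ → 𝕜}
    (ha : ∀ k, ‖a k‖ ≤ 1) (hb : ∀ k, ‖b k‖ ≤ 1) (n : ℕ) :
    ‖∏ k ∈ range n, a k - ∏ k ∈ range n, b k‖ ≤ ∑ k ∈ range n, ‖a k - b k‖ := by
  induction n with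
  | zero => simp
  | succ n ih =>
    have hprod : ‖∏ k ∈ range n, b k‖ ≤ 1 :=
      (Finset.norm_prod_le _ _).trans (prod_le_one (fun _ _ => norm_nonneg _) fun k _ => hb k)
    calc ‖∏ k ∈ range (n + 1), a k - ∏ k ∈ range (n + 1), b k‖
        = ‖(∏ k ∈ range n, a k - ∏ k ∈ range n, b k) * a n
            + (∏ k ∈ range n, b k) * (a n - b n)‖ := by
          rw [prod_range_succ, prod_range_succ]
          ring_nf
      _ ≤ ‖∏ k ∈ range n, a k - ∏ k ∈ range n, b k‖ * ‖a n‖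
            + ‖∏ k ∈ range n, b k‖ * ‖a n - b n‖ :=
          (norm_add_le _ _).trans (add_le_add (norm_mul_le _ _) (norm_mul_le _ _))
      _ ≤ ∑ k ∈ range (n + 1), ‖a k - b k‖ := by
          rw [sum_range_succ]
          exact add_le_add ((mul_le_of_le_one_right (norm_nonneg _) (ha n)).trans ih)
            (mul_le_of_le_one_left (norm_nonneg _) hprod)

theorem norm_exp_sum_mul_I_sub_prod_mul_exp_le {x : ℕ → ℝ} {δ : ℝ} (hδ : δ ≤ 1)
    (hx : ∀ k, |x k| ≤ δ) (n : ℕ) :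
    ‖Complex.exp ((∑ k ∈ range n, x k : ℝ) * Complex.I)
        - (∏ k ∈ range n, (1 + x k * Complex.I)) * Real.exp (-(∑ k ∈ range n, x k ^ 2) / 2)‖
      ≤ 2 * δ * ∑ k ∈ range n, x k ^ 2 := by
  have hexp : Complex.exp ((∑ k ∈ range n, x k : ℝ) * Complex.I)
      = ∏ k ∈ range n, Complex.exp (x k * Complex.I) := by
    rw [← Complex.exp_sum, Complex.ofReal_sum, sum_mul]
  have hprod : (∏ k ∈ range n, (1 + x k * Complex.I)) * Real.exp (-(∑ k ∈ range n, x k ^ 2) / 2)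
      = ∏ k ∈ range n, (1 + x k * Complex.I) * Real.exp (-(x k ^ 2) / 2) := by
    rw [prod_mul_distrib, ← Complex.ofReal_prod, ← Real.exp_sum, ← sum_div, sum_neg_distrib]
  have hfactor : ∀ k, ‖(1 + x k * Complex.I : ℂ) * Real.exp (-(x k ^ 2) / 2)‖ ≤ 1 := fun k => by
    rw [norm_mul, Complex.norm_real, Real.norm_of_nonneg (Real.exp_pos _).le]
    calc _ ≤ Real.exp (x k ^ 2 / 2) * Real.exp (-(x k ^ 2) / 2) := by
          gcongr
          exact norm_one_add_ofReal_mul_I_le _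
      _ = 1 := by rw [← Real.exp_add, neg_div, add_neg_cancel, Real.exp_zero]
  rw [hexp, hprod, mul_sum]
  refine (norm_prod_sub_prod_le_sum (fun k => (Complex.norm_exp_ofReal_mul_I _).le) hfactor n).trans
    (sum_le_sum fun k _ => ?_)
  calc _ ≤ 2 * |x k| ^ 3 := norm_exp_mul_I_sub_one_add_mul_exp_le ((hx k).trans hδ)
    _ = 2 * |x k| * x k ^ 2 := by rw [← sq_abs]; ring
    _ ≤ 2 * δ * x k ^ 2 := by
        gcongr
        exact hx k

theorem norm_exp_sum_mul_I_sub_prod_mul_exp_const_le {x : ℕ → ℝ} {δ : ℝ} (hδ : δ ≤ 1)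
    (hx : ∀ k, |x k| ≤ δ) (n : ℕ) (v : ℝ) :
    ‖Complex.exp ((∑ k ∈ range n, x k : ℝ) * Complex.I)
        - (∏ k ∈ range n, (1 + x k * Complex.I)) * Real.exp (-v / 2)‖
      ≤ 2 * δ * ∑ k ∈ range n, x k ^ 2 + |1 - Real.exp ((∑ k ∈ range n, x k ^ 2 - v) / 2)| := by
  have hprod := norm_prod_one_add_ofReal_mul_I_le x n
  set w := ∑ k ∈ range n, x k ^ 2
  have hswap : ‖(∏ k ∈ range n, (1 + x k * Complex.I)) * Real.exp (-w / 2)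
      - (∏ k ∈ range n, (1 + x k * Complex.I)) * Real.exp (-v / 2)‖
      ≤ |1 - Real.exp ((w - v) / 2)| := by
    rw [← mul_sub, norm_mul, ← Complex.ofReal_sub, Complex.norm_real, Real.norm_eq_abs]
    calc _ ≤ Real.exp (w / 2) * |Real.exp (-w / 2) - Real.exp (-v / 2)| := by gcongr
      _ = |1 - Real.exp ((w - v) / 2)| := by
          rw [← abs_of_pos (Real.exp_pos (w / 2)), ← abs_mul, mul_sub, ← Real.exp_add,
            ← Real.exp_add, neg_div, add_neg_cancel, Real.exp_zero, neg_div, ← sub_eq_add_neg,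
            sub_div]
  exact (norm_sub_le_norm_sub_add_norm_sub _ _ _).trans
    (add_le_add (norm_exp_sum_mul_I_sub_prod_mul_exp_le hδ hx n) hswap)

/-! ### McLeish's central limit theorem -/

/-- `ξ` is a martingale difference sequence for `ℱ`. The index is that of the conditioning:
`ξ k` is the increment from time `k` to time `k + 1`. -/
structure IsMartingaleDiff {m0 : MeasurableSpace Ω} (μ : Measure Ω) (ℱ : Filtration ℕ m0)
    (ξ : ℕ → Ω → ℝ) : Prop where
  stronglyMeasurable : ∀ k, StronglyMeasurable[ℱ (k + 1)] (ξ k)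
  integrable : ∀ k, Integrable (ξ k) μ
  condExp_eq_zero : ∀ k, μ[ξ k | ℱ k] =ᵐ[μ] 0

namespace IsMartingaleDiff

variable {m0 : MeasurableSpace Ω} {μ : Measure Ω} {ℱ : Filtration ℕ m0}
  {ξ : ℕ → Ω → ℝ}

theorem mul (h : IsMartingaleDiff μ ℱ ξ) {g : ℕ → Ω → ℝ}
    (hg : ∀ k, StronglyMeasurable[ℱ k] (g k)) (hgξ : ∀ k, Integrable (g k * ξ k) μ) :
    IsMartingaleDiff μ ℱ fun k => g k * ξ k where
  stronglyMeasurable k := ((hg k).mono (ℱ.mono k.le_succ)).mul (h.stronglyMeasurable k)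
  integrable := hgξ
  condExp_eq_zero k := by
    filter_upwards [condExp_mul_of_stronglyMeasurable_left (hg k) (hgξ k) (h.integrable k),
      h.condExp_eq_zero k] with ω hpull hzero
    simp [hpull, hzero]

theorem const_mul (h : IsMartingaleDiff μ ℱ ξ) (c : ℝ) :
    IsMartingaleDiff μ ℱ fun k ω => c * ξ k ω :=
  h.mul (g := fun _ _ => c) (fun _ => stronglyMeasurable_const) fun k =>
    (h.integrable k).const_mul c

theorem integral_smul_eq_zero {E : Type*} [NormedAddCommGroup E] [NormedSpace ℝ E]
    [CompleteSpace E] [IsFiniteMeasure μ] (h : IsMartingaleDiff μ ℱ ξ) {k : ℕ} {g : Ω → E}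
    (hg : StronglyMeasurable[ℱ k] g) (hξg : Integrable (fun ω => ξ k ω • g ω) μ) :
    ∫ ω, ξ k ω • g ω ∂μ = 0 := by
  rw [← integral_condExp (ℱ.le k)]
  refine integral_eq_zero_of_ae ?_
  filter_upwards [condExp_smul_of_aestronglyMeasurable_right (h.integrable k) hξg
    hg.aestronglyMeasurable, h.condExp_eq_zero k] with ω hpull hzero
  exact hpull.trans (by simp [hzero])

theorem stronglyMeasurable_sum (h : IsMartingaleDiff μ ℱ ξ) (n : ℕ) :
    StronglyMeasurable[ℱ n] fun ω => ∑ k ∈ range n, ξ k ω :=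
  Finset.stronglyMeasurable_fun_sum _ fun k hk =>
    (h.stronglyMeasurable k).mono (ℱ.mono (mem_range.1 hk))

theorem integral_sq_sum [IsFiniteMeasure μ] (h : IsMartingaleDiff μ ℱ ξ) (hξ : ∀ k, MemLp (ξ k) 2 μ)
    (n : ℕ) : ∫ ω, (∑ k ∈ range n, ξ k ω) ^ 2 ∂μ = ∑ k ∈ range n, ∫ ω, ξ k ω ^ 2 ∂μ := by
  induction n with
  | zero => simp
  | succ n ih =>
    have hsum : MemLp (fun ω => ∑ k ∈ range n, ξ k ω) 2 μ := memLp_finsetSum _ fun k _ => hξ k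
    have hcross : Integrable (fun ω => ξ n ω • ∑ k ∈ range n, ξ k ω) μ :=
      (hξ n).integrable_mul hsum
    have hhead : Integrable (fun ω => (∑ k ∈ range n, ξ k ω) ^ 2
        + 2 * (ξ n ω • ∑ k ∈ range n, ξ k ω)) μ := hsum.integrable_sq.add (hcross.const_mul 2)
    calc ∫ ω, (∑ k ∈ range (n + 1), ξ k ω) ^ 2 ∂μ
        = ∫ ω, ((∑ k ∈ range n, ξ k ω) ^ 2 + 2 * (ξ n ω • ∑ k ∈ range n, ξ k ω)
            + ξ n ω ^ 2) ∂μ := by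
          congr with ω
          rw [sum_range_succ, smul_eq_mul]
          ring
      _ = ∑ k ∈ range (n + 1), ∫ ω, ξ k ω ^ 2 ∂μ := by
          rw [integral_add hhead (hξ n).integrable_sq,
            integral_add hsum.integrable_sq (hcross.const_mul 2), integral_const_mul,
            h.integral_smul_eq_zero (h.stronglyMeasurable_sum n) hcross, ih, sum_range_succ]
          ring

theorem stronglyMeasurable_prod_one_add_mul_I (h : IsMartingaleDiff μ ℱ ξ) (n : ℕ) :
    StronglyMeasurable[ℱ n] fun ω => ∏ k ∈ range n, (1 + ξ k ω * Complex.I) := by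
  refine Finset.stronglyMeasurable_fun_prod _ fun k hk => ?_
  exact stronglyMeasurable_const.add ((Complex.continuous_ofReal.comp_stronglyMeasurable
    ((h.stronglyMeasurable k).mono (ℱ.mono (mem_range.1 hk)))).mul_const Complex.I)

theorem integrable_prod_one_add_mul_I [IsFiniteMeasure μ] (h : IsMartingaleDiff μ ℱ ξ) {δ : ℝ}
    (hδ : ∀ k ω, |ξ k ω| ≤ δ) (n : ℕ) :
    Integrable (fun ω => ∏ k ∈ range n, (1 + ξ k ω * Complex.I)) μ := by
  refine Integrable.of_bound
    ((h.stronglyMeasurable_prod_one_add_mul_I n).mono (ℱ.le n)).aestronglyMeasurable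
    (Real.exp ((∑ k ∈ range n, δ ^ 2) / 2)) (Eventually.of_forall fun ω => ?_)
  refine (norm_prod_one_add_ofReal_mul_I_le (ξ · ω) n).trans ?_
  gcongr (Real.exp ((∑ k ∈ range n, ?_) / 2)) with k
  exact sq_le_sq' (abs_le.1 (hδ k ω)).1 (abs_le.1 (hδ k ω)).2

theorem integral_prod_one_add_mul_I [IsProbabilityMeasure μ] (h : IsMartingaleDiff μ ℱ ξ) {δ : ℝ}
    (hδ : ∀ k ω, |ξ k ω| ≤ δ) (n : ℕ) :
    ∫ ω, ∏ k ∈ range n, (1 + ξ k ω * Complex.I) ∂μ = 1 := by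
  induction n with
  | zero => simp
  | succ n ih =>
    have hint := h.integrable_prod_one_add_mul_I hδ n
    have hmeas := h.stronglyMeasurable_prod_one_add_mul_I n
    have hincr : Integrable (fun ω => ξ n ω • ((∏ k ∈ range n, (1 + ξ k ω * Complex.I))
        * Complex.I)) μ :=
      (hint.mul_const Complex.I).bdd_smul δ (h.integrable n).aestronglyMeasurable
        (Eventually.of_forall (hδ n))
    calc ∫ ω, ∏ k ∈ range (n + 1), (1 + ξ k ω * Complex.I) ∂μ
        = ∫ ω, (∏ k ∈ range n, (1 + ξ k ω * Complex.I)
            + ξ n ω • ((∏ k ∈ range n, (1 + ξ k ω * Complex.I)) * Complex.I)) ∂μ := by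
          congr with ω
          rw [prod_range_succ, Complex.real_smul]
          ring
      _ = 1 := by
          rw [integral_add hint hincr, ih, h.integral_smul_eq_zero (hmeas.mul_const _) hincr,
            add_zero]

end IsMartingaleDiff

/-- The sequence `ξ` set to zero from the first time its running sum of squares exceeds `B`.
Whether `ξ k` is kept depends on `ξ 0, …, ξ (k - 1)` only, which preserves martingale
differences at the cost of an overshoot by one term. -/
def truncateSq (ξ : ℕ → Ω → ℝ) (B : ℝ) (k : ℕ) (ω : Ω) : ℝ :=
  if ∑ i ∈ range k, ξ i ω ^ 2 ≤ B then ξ k ω else 0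

section TruncateSq

variable {ξ : ℕ → Ω → ℝ} {B δ : ℝ} {ω : Ω}

theorem abs_truncateSq_le (k : ℕ) : |truncateSq ξ B k ω| ≤ |ξ k ω| := by
  unfold truncateSq
  split_ifs
  · exact le_rfl
  · simp

theorem truncateSq_eq_of_sum_sq_le {n k : ℕ} (h : ∑ i ∈ range n, ξ i ω ^ 2 ≤ B) (hk : k < n) :
    truncateSq ξ B k ω = ξ k ω :=
  if_pos ((sum_le_sum_of_subset_of_nonneg (range_mono hk.le) fun _ _ _ => sq_nonneg _).trans h)

theorem sum_truncateSq_sq_le (hB : 0 ≤ B) (hξ : ∀ k, |ξ k ω| ≤ δ) (n : ℕ) :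
    ∑ k ∈ range n, truncateSq ξ B k ω ^ 2 ≤ B + δ ^ 2 := by
  induction n with
  | zero => simpa using by positivity
  | succ n ih =>
    rw [sum_range_succ]
    by_cases h : ∑ i ∈ range n, ξ i ω ^ 2 ≤ B
    · refine add_le_add (le_trans (sum_le_sum fun k _ => ?_) h) ?_
      · exact sq_le_sq.2 (abs_truncateSq_le k)
      · exact sq_le_sq.2 (((abs_truncateSq_le n).trans (hξ n)).trans (le_abs_self δ))
    · rw [truncateSq, if_neg h, zero_pow two_ne_zero, add_zero]
      exact ih

theorem isMartingaleDiff_truncateSq {m0 : MeasurableSpace Ω} {μ : Measure Ω}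
    {ℱ : Filtration ℕ m0} (h : IsMartingaleDiff μ ℱ ξ) :
    IsMartingaleDiff μ ℱ (truncateSq ξ B) := by
  have hmul : truncateSq ξ B
      = fun k => {ω | ∑ i ∈ range k, ξ i ω ^ 2 ≤ B}.indicator 1 * ξ k := by
    ext k ω
    by_cases hω : ∑ i ∈ range k, ξ i ω ^ 2 ≤ B <;> simp [truncateSq, hω]
  have hset : ∀ k, MeasurableSet[ℱ k] {ω | ∑ i ∈ range k, ξ i ω ^ 2 ≤ B} := fun k =>
    StronglyMeasurable.measurableSet_le (Finset.stronglyMeasurable_fun_sum _ fun i hi =>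
      ((h.stronglyMeasurable i).mono (ℱ.mono (mem_range.1 hi))).pow 2) stronglyMeasurable_const
  rw [hmul]
  refine h.mul (fun k => stronglyMeasurable_one.indicator (hset k)) fun k => ?_
  refine ((h.integrable k).indicator (ℱ.le k _ (hset k))).congr (Eventually.of_forall fun ω => ?_)
  simp only [Set.indicator_apply, Pi.mul_apply, Pi.one_apply, ite_mul, one_mul, zero_mul]

end TruncateSq

section McLeish

variable {m0 : MeasurableSpace Ω} {μ : Measure Ω} {ι : Type*} {l : Filter ι}
  {ℱ : ι → Filtration ℕ m0} {ξ : ι → ℕ → Ω → ℝ} {N : ι → ℕ} {δ : ι → ℝ}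

/-- The error made in replacing `exp (i ∑ ξ k)` by the mean-one variable `∏ (1 + i ξ k)`,
corrected by the limiting Gaussian factor `exp (-v / 2)` and truncated to be bounded. -/
def mcLeishError (ξ : ℕ → Ω → ℝ) (n : ℕ) (v : ℝ) (ω : Ω) : ℂ :=
  Complex.exp ((∑ k ∈ range n, ξ k ω : ℝ) * Complex.I)
    - (∏ k ∈ range n, (1 + truncateSq ξ (|v| + 1) k ω * Complex.I)) * Real.exp (-v / 2)

theorem norm_mcLeishError_le {ξ : ℕ → Ω → ℝ} {δ : ℝ} {ω : Ω} (hδ : δ ≤ 1)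
    (hξ : ∀ k, |ξ k ω| ≤ δ) (n : ℕ) (v : ℝ) :
    ‖mcLeishError ξ n v ω‖ ≤ 1 + Real.exp ((|v| + 2) / 2) * Real.exp (-v / 2) := by
  have hsq : δ ^ 2 ≤ 1 := pow_le_one₀ ((abs_nonneg _).trans (hξ 0)) hδ
  have hprod : ‖∏ k ∈ range n, (1 + truncateSq ξ (|v| + 1) k ω * Complex.I)‖
      ≤ Real.exp ((|v| + 2) / 2) := by
    refine (norm_prod_one_add_ofReal_mul_I_le (truncateSq ξ (|v| + 1) · ω) n).trans ?_
    gcongr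
    linarith [sum_truncateSq_sq_le (B := |v| + 1) (by positivity) hξ n]
  refine (norm_sub_le _ _).trans ?_
  rw [Complex.norm_exp_ofReal_mul_I, norm_mul, Complex.norm_real,
    Real.norm_of_nonneg (Real.exp_pos _).le]
  gcongr

theorem norm_mcLeishError_le_of_abs_sub_lt {ξ : ℕ → Ω → ℝ} {δ : ℝ} {ω : Ω}
    (hδ : δ ≤ 1) (hξ : ∀ k, |ξ k ω| ≤ δ) {n : ℕ} {v : ℝ} (hv : |∑ k ∈ range n, ξ k ω ^ 2 - v| < 1) :
    ‖mcLeishError ξ n v ω‖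
      ≤ 2 * δ * (|v| + 1) + |1 - Real.exp ((∑ k ∈ range n, ξ k ω ^ 2 - v) / 2)| := by
  have hδ0 : 0 ≤ δ := (abs_nonneg _).trans (hξ 0)
  have hsum : ∑ k ∈ range n, ξ k ω ^ 2 ≤ |v| + 1 := by
    linarith [(abs_lt.1 hv).2, le_abs_self v]
  have hprod : ∏ k ∈ range n, (1 + truncateSq ξ (|v| + 1) k ω * Complex.I)
      = ∏ k ∈ range n, (1 + ξ k ω * Complex.I) :=
    prod_congr rfl fun k hk => by rw [truncateSq_eq_of_sum_sq_le hsum (mem_range.1 hk)]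
  rw [mcLeishError, hprod]
  refine (norm_exp_sum_mul_I_sub_prod_mul_exp_const_le hδ hξ n v).trans ?_
  gcongr

theorem tendstoInMeasure_mcLeishError [IsFiniteMeasure μ] (hδ : Tendsto δ l (𝓝 0))
    (hbound : ∀ i k ω, |ξ i k ω| ≤ δ i) {v : ℝ}
    (hsq : TendstoInMeasure μ (fun i ω => ∑ k ∈ range (N i), ξ i k ω ^ 2) l fun _ => v) :
    TendstoInMeasure μ (fun i => mcLeishError (ξ i) (N i) v) l 0 := by
  rw [tendstoInMeasure_iff_measureReal_norm] at hsq ⊢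
  intro ε hε
  have hcont : ContinuousAt (fun u : ℝ => |1 - Real.exp (u / 2)|) 0 := by fun_prop
  obtain ⟨η, hη, hexp⟩ := Metric.continuousAt_iff.1 hcont (ε / 2) (half_pos hε)
  simp only [zero_div, Real.exp_zero, sub_self, abs_zero, dist_zero_right, Real.norm_eq_abs,
    abs_abs] at hexp
  have hδ' : Tendsto (fun i => 2 * δ i * (|v| + 1)) l (𝓝 0) := by
    simpa using (hδ.const_mul 2).mul_const (|v| + 1)
  refine squeeze_zero' (Eventually.of_forall fun _ => measureReal_nonneg) ?_
    (hsq (min η 1) (by positivity))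
  filter_upwards [hδ.eventually_le_const one_pos, hδ'.eventually_lt_const (half_pos hε)]
    with i hi hi'
  refine measureReal_mono fun ω hω => ?_
  by_contra! hlt
  have hnear : |∑ k ∈ range (N i), ξ i k ω ^ 2 - v| < min η 1 := not_le.1 hlt
  have herr := norm_mcLeishError_le_of_abs_sub_lt hi (hbound i · ω)
    (hnear.trans_le (min_le_right _ _))
  have hω' : ε ≤ ‖mcLeishError (ξ i) (N i) v ω‖ := by simpa using hω
  linarith [hexp (hnear.trans_le (min_le_left _ _))]

theorem integrable_exp_sum_mul_I [IsFiniteMeasure μ] {ℱ : Filtration ℕ m0} {ξ : ℕ → Ω → ℝ}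
    (h : IsMartingaleDiff μ ℱ ξ) (n : ℕ) :
    Integrable (fun ω => Complex.exp ((∑ k ∈ range n, ξ k ω : ℝ) * Complex.I)) μ := by
  have hsum : Measurable fun ω => ∑ k ∈ range n, ξ k ω :=
    ((h.stronglyMeasurable_sum n).mono (ℱ.le n)).measurable
  exact Integrable.of_bound (Measurable.aestronglyMeasurable (by fun_prop)) 1
    (Eventually.of_forall fun ω => (Complex.norm_exp_ofReal_mul_I _).le)

theorem integrable_prod_truncateSq [IsFiniteMeasure μ] {ℱ : Filtration ℕ m0} {ξ : ℕ → Ω → ℝ}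
    {δ B : ℝ} (h : IsMartingaleDiff μ ℱ ξ) (hbound : ∀ k ω, |ξ k ω| ≤ δ) (n : ℕ) :
    Integrable (fun ω => ∏ k ∈ range n, (1 + truncateSq ξ B k ω * Complex.I)) μ :=
  (isMartingaleDiff_truncateSq h).integrable_prod_one_add_mul_I
    (fun k ω => (abs_truncateSq_le k).trans (hbound k ω)) n

theorem integral_mcLeishError [IsProbabilityMeasure μ] {ℱ : Filtration ℕ m0} {ξ : ℕ → Ω → ℝ}
    {δ : ℝ} (h : IsMartingaleDiff μ ℱ ξ) (hbound : ∀ k ω, |ξ k ω| ≤ δ) (n : ℕ) (v : ℝ) :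
    ∫ ω, mcLeishError ξ n v ω ∂μ
      = ∫ ω, Complex.exp ((∑ k ∈ range n, ξ k ω : ℝ) * Complex.I) ∂μ - Real.exp (-v / 2) := by
  unfold mcLeishError
  rw [integral_sub (integrable_exp_sum_mul_I h n)
      ((integrable_prod_truncateSq h hbound n).mul_const _), integral_mul_const,
    (isMartingaleDiff_truncateSq h).integral_prod_one_add_mul_I
      (fun k ω => (abs_truncateSq_le k).trans (hbound k ω)), one_mul]

theorem tendsto_integral_exp_sum_mul_I [IsProbabilityMeasure μ] [l.IsCountablyGenerated]
    (h : ∀ i, IsMartingaleDiff μ (ℱ i) (ξ i)) (hδ : Tendsto δ l (𝓝 0))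
    (hbound : ∀ i k ω, |ξ i k ω| ≤ δ i) {v : ℝ}
    (hsq : TendstoInMeasure μ (fun i ω => ∑ k ∈ range (N i), ξ i k ω ^ 2) l fun _ => v) :
    Tendsto (fun i => ∫ ω, Complex.exp ((∑ k ∈ range (N i), ξ i k ω : ℝ) * Complex.I) ∂μ) l
      (𝓝 (Real.exp (-v / 2) : ℝ)) := by
  have hmeas : ∀ i, AEStronglyMeasurable (mcLeishError (ξ i) (N i) v) μ := fun i =>
    ((integrable_exp_sum_mul_I (h i) (N i)).sub
      ((integrable_prod_truncateSq (h i) (hbound i) (N i)).mul_const _)).aestronglyMeasurable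
  have herr := tendsto_integral_zero_of_tendstoInMeasure hmeas
    ((hδ.eventually_le_const one_pos).mono fun i hi ω =>
      norm_mcLeishError_le hi (hbound i · ω) (N i) v) (tendstoInMeasure_mcLeishError hδ hbound hsq)
  refine (zero_add ((Real.exp (-v / 2) : ℝ) : ℂ) ▸ herr.add_const _).congr fun i => ?_
  rw [integral_mcLeishError (h i) (hbound i), sub_add_cancel]

theorem tendstoInDistribution_sum_of_isMartingaleDiff [IsProbabilityMeasure μ]
    {ℱ : ℕ → Filtration ℕ m0} {ξ : ℕ → ℕ → Ω → ℝ} {N : ℕ → ℕ} {δ : ℕ → ℝ} {v : ℝ≥0}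
    (h : ∀ n, IsMartingaleDiff μ (ℱ n) (ξ n)) (hδ : Tendsto δ atTop (𝓝 0))
    (hbound : ∀ n k ω, |ξ n k ω| ≤ δ n)
    (hsq : TendstoInMeasure μ (fun n ω => ∑ k ∈ range (N n), ξ n k ω ^ 2) atTop fun _ => (v : ℝ)) :
    TendstoInDistribution (fun n ω => ∑ k ∈ range (N n), ξ n k ω) atTop (id : ℝ → ℝ)
      (fun _ => μ) (gaussianReal 0 v) where
  forall_aemeasurable n :=
    (((h n).stronglyMeasurable_sum (N n)).mono ((ℱ n).le _)).measurable.aemeasurable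
  aemeasurable_limit := aemeasurable_id
  tendsto := by
    refine ProbabilityMeasure.tendsto_iff_tendsto_charFun.2 fun t => ?_
    have hδt : Tendsto (fun n => |t| * δ n) atTop (𝓝 0) := by simpa using hδ.const_mul |t|
    have hboundt : ∀ n k ω, |t * ξ n k ω| ≤ |t| * δ n := fun n k ω => by
      rw [abs_mul]
      exact mul_le_mul_of_nonneg_left (hbound n k ω) (abs_nonneg t)
    have hsqt : TendstoInMeasure μ (fun n ω => ∑ k ∈ range (N n), (t * ξ n k ω) ^ 2) atTop
        fun _ => t ^ 2 * (v : ℝ) := by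
      simpa only [mul_pow, ← mul_sum] using tendstoInMeasure_comp_const (g := (t ^ 2 * ·)) hsq
        (by fun_prop)
    have hlim : charFun (Measure.map id (gaussianReal 0 v)) t
        = (Real.exp (-(t ^ 2 * v) / 2) : ℝ) := by
      rw [Measure.map_id, charFun_gaussianReal]
      push_cast
      ring_nf
    simp only [ProbabilityMeasure.coe_mk, hlim]
    refine (tendsto_integral_exp_sum_mul_I (fun n => (h n).const_mul t) hδt hboundt hsqt).congr
      fun n => ?_
    rw [charFun_apply_real, integral_map
      (((h n).stronglyMeasurable_sum (N n)).mono ((ℱ n).le _)).measurable.aemeasurable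
      (Measurable.aestronglyMeasurable (by fun_prop))]
    simp only [← mul_sum, Complex.ofReal_mul]

end McLeish

/-! ### Harmonic sums and recursive inequalities -/

theorem le_div_one_sub_mul_pow {u : ℕ → ℝ} {β r : ℝ} {i : ℕ} (hβ0 : 0 ≤ β) (hβ1 : β < 1)
    (hr : 0 ≤ r) (hu0 : u 0 ≤ 0)
    (hu : ∀ k : ℕ, u (k + 1) ≤ (1 + i * β / k) * u k + r * ((k + 1) ^ i - k ^ i)) (k : ℕ) :
    u k ≤ r / (1 - β) * k ^ i := by
  have hpos : 0 < 1 - β := by linarith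
  induction k with
  | zero => exact hu0.trans (by positivity)
  | succ k ih =>
    have hbernoulli : i / k * (k : ℝ) ^ i ≤ (k + 1) ^ i - k ^ i := by
      rcases eq_or_ne k 0 with rfl | hk
      · rcases eq_or_ne i 0 with rfl | hi <;> simp [*]
      · have hone := one_add_mul_le_pow (a := 1 / (k : ℝ)) (by
          linarith [show (0 : ℝ) ≤ 1 / k by positivity]) i
        calc i / k * (k : ℝ) ^ i = (1 + i * (1 / k)) * (k : ℝ) ^ i - k ^ i := by ring
          _ ≤ (1 + 1 / k) ^ i * (k : ℝ) ^ i - k ^ i := by gcongr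
          _ = (k + 1) ^ i - k ^ i := by
            rw [← mul_pow]
            field_simp
    calc u (k + 1) ≤ (1 + i * β / k) * u k + r * ((k + 1) ^ i - k ^ i) := hu k
      _ ≤ (1 + i * β / k) * (r / (1 - β) * k ^ i) + r * ((k + 1) ^ i - k ^ i) := by gcongr
      _ = r / (1 - β) * k ^ i + β * (r / (1 - β)) * (i / k * k ^ i)
          + r * ((k + 1) ^ i - k ^ i) := by ring
      _ ≤ r / (1 - β) * k ^ i + β * (r / (1 - β)) * ((k + 1) ^ i - k ^ i)
          + r * ((k + 1) ^ i - k ^ i) := by gcongr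
      _ = r / (1 - β) * (k + 1 : ℕ) ^ i := by
        push_cast
        field_simp
        ring

theorem sum_Icc_eq_sum_range {M : Type*} [AddCommMonoid M] {f : ℕ → M} (hf : f 0 = 0) (n : ℕ) :
    ∑ k ∈ Icc 1 (n - 1), f k = ∑ k ∈ range n, f k := by
  refine sum_subset (fun k hk => ?_) fun k hk hk' => ?_
  · simp only [mem_Icc, mem_range] at hk ⊢
    omega
  · simp only [mem_Icc, mem_range] at hk hk'
    obtain rfl : k = 0 := by omega
    exact hf

theorem sum_range_inv_eq_harmonic (n : ℕ) :
    ∑ k ∈ range (n + 1), (k : ℝ)⁻¹ = harmonic n := by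
  rw [sum_range_succ', harmonic]
  push_cast
  simp

theorem abs_sum_range_inv_sub_log_le {n : ℕ} (hn : n ≠ 0) :
    |∑ k ∈ range n, (k : ℝ)⁻¹ - Real.log n| ≤ 1 := by
  obtain ⟨n, rfl⟩ := Nat.exists_eq_succ_of_ne_zero hn
  rw [Nat.succ_eq_add_one, sum_range_inv_eq_harmonic, abs_le]
  have hmono : Real.log n ≤ Real.log (n + 1 : ℕ) := by
    rcases eq_or_ne n 0 with rfl | hn
    · simp
    · gcongr
      exact n.le_succ
  constructor <;> linarith [log_add_one_le_harmonic n, harmonic_le_one_add_log n]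

theorem sum_range_inv_sq_le_tsum (n : ℕ) :
    ∑ k ∈ range n, ((k : ℝ) ^ 2)⁻¹ ≤ ∑' k : ℕ, ((k : ℝ) ^ 2)⁻¹ :=
  (Real.summable_nat_pow_inv.2 one_lt_two).sum_le_tsum _ fun _ _ => by positivity

theorem tendsto_mul_sqrt_one_add_div_atTop (c : ℝ) :
    Tendsto (fun x => c * √(1 + x) / x) atTop (𝓝 0) := by
  have hinv := tendsto_inv_atTop_zero (𝕜 := ℝ)
  have hlim := (((hinv.pow 2).add hinv).sqrt).const_mul c
  rw [show c * √(0 ^ 2 + 0) = 0 by simp] at hlim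
  refine hlim.congr' ?_
  filter_upwards [eventually_gt_atTop 0] with x hx
  rw [show x⁻¹ ^ 2 + x⁻¹ = (1 + x) / x ^ 2 by field_simp, Real.sqrt_div' _ (sq_nonneg x),
    Real.sqrt_sq hx.le, mul_div_assoc]

theorem tendsto_log_natCast_atTop : Tendsto (fun n : ℕ => Real.log n) atTop atTop :=
  Real.tendsto_log_atTop.comp tendsto_natCast_atTop_atTop

theorem integral_abs_le_sqrt_integral_sq {m0 : MeasurableSpace Ω} {μ : Measure Ω}
    [IsProbabilityMeasure μ] {f : Ω → ℝ} (hf : MemLp f 2 μ) :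
    ∫ ω, |f ω| ∂μ ≤ √(∫ ω, f ω ^ 2 ∂μ) := by
  refine Real.le_sqrt_of_sq_le ?_
  have hvar := variance_nonneg (|f|) μ
  rw [variance_eq_sub hf.abs] at hvar
  simpa only [Pi.pow_apply, Pi.abs_apply, sq_abs, sub_nonneg] using hvar

theorem tendstoInMeasure_div_log {m0 : MeasurableSpace Ω} {μ : Measure Ω} [IsFiniteMeasure μ]
    {Y : ℕ → Ω → ℝ} {b c : ℝ} (hY : ∀ n, Integrable (Y n) μ)
    (hle : ∀ n, n ≠ 0 → ∫ ω, |Y n ω - b * Real.log n| ∂μ ≤ c * √(1 + Real.log n)) :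
    TendstoInMeasure μ (fun n ω => Y n ω / Real.log n) atTop fun _ => b := by
  refine tendstoInMeasure_of_integral_abs_sub_le (fun n => (hY n).div_const _)
    (integrable_const b) ?_
    ((tendsto_mul_sqrt_one_add_div_atTop c).comp tendsto_log_natCast_atTop)
  filter_upwards [eventually_gt_atTop 1] with n hn
  have hlog : 0 < Real.log n := Real.log_pos (Nat.one_lt_cast.2 hn)
  have hrescale : ∀ ω, |Y n ω / Real.log n - b| = |Y n ω - b * Real.log n| / Real.log n :=
    fun ω => by
      rw [div_sub' hlog.ne', abs_div, abs_of_pos hlog, mul_comm b]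
  simp only [hrescale, integral_div]
  exact div_le_div_of_nonneg_right (hle n (by omega)) hlog.le

/-! ### The elephant random walk -/

/-- The empirical mean `S k / k` of the first `k` steps. It is `0` for `k = 0`, by `x / 0 = 0`, so
that sums over `1 ≤ k < n` of its multiples may be taken over `range n`. -/
def erwMean (X : ℕ → Ω → ℝ) (k : ℕ) (ω : Ω) : ℝ :=
  erwS X k ω / k

/-- The innovation `X (k + 1) - 𝔼[X (k + 1) ∣ ℱ k]` of the walk, for `k ≥ 1`. -/
def erwInnovation (X : ℕ → Ω → ℝ) (p : ℝ) (k : ℕ) (ω : Ω) : ℝ :=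
  X (k + 1) ω - (2 * p - 1) * erwMean X k ω

/-- The score martingale of the walk: up to a constant factor, the derivative in `p` of the Gaussian
quasi-log-likelihood. -/
def erwScore (X : ℕ → Ω → ℝ) (p : ℝ) (n : ℕ) (ω : Ω) : ℝ :=
  ∑ k ∈ range n, erwMean X k ω * erwInnovation X p k ω

/-- The part of `(3 - 4 * p) / 4 * V n` that stays bounded in mean: what is left over by telescoping
`(k + 1) * (S k / k) ^ 2`. The term `k = 0` of the sum vanishes by `x / 0 = 0`. -/
def erwRemainder (X : ℕ → Ω → ℝ) (n : ℕ) (ω : Ω) : ℝ :=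
  (n + 1) * erwMean X n ω ^ 2 + ∑ k ∈ range n, erwMean X (k + 1) ω ^ 2 / k

section Walk

variable {X : ℕ → Ω → ℝ} {p : ℝ} {ω : Ω}

theorem erwS_zero : erwS X 0 ω = 0 := by simp [erwS]

theorem erwS_succ (k : ℕ) : erwS X (k + 1) ω = erwS X k ω + X (k + 1) ω :=
  sum_Icc_succ_top (by omega) _

theorem erwMean_zero : erwMean X 0 ω = 0 := by simp [erwMean]

theorem erwS_eq_mul_erwMean (k : ℕ) : erwS X k ω = k * erwMean X k ω := by
  rcases eq_or_ne k 0 with rfl | hk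
  · simp [erwS_zero]
  · rw [erwMean]
    field_simp

theorem erwV_eq (n : ℕ) : erwV X n ω = 4 * ∑ k ∈ range n, erwMean X k ω ^ 2 := by
  rw [erwV, ← sum_Icc_eq_sum_range (by simp [erwMean_zero])]
  rfl

theorem erwPhat_sub_eq {n : ℕ} (hV : erwV X n ω ≠ 0) : erwPhat X n ω - p
    = 2 * erwScore X p n ω / erwV X n ω := by
  have hscore : erwScore X p n ω
      = ∑ k ∈ range n, erwMean X k ω * (X (k + 1) ω + erwMean X k ω)
        - 2 * p * ∑ k ∈ range n, erwMean X k ω ^ 2 := by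
    rw [erwScore, mul_sum, ← sum_sub_distrib]
    refine sum_congr rfl fun k _ => ?_
    rw [erwInnovation]
    ring
  have hPhat : erwPhat X n ω = (∑ k ∈ range n, erwMean X k ω * (X (k + 1) ω + erwMean X k ω)) /
      (2 * ∑ k ∈ range n, erwMean X k ω ^ 2) := by
    rw [← sum_Icc_eq_sum_range (by simp [erwMean_zero]),
      ← sum_Icc_eq_sum_range (by simp [erwMean_zero])]
    rfl
  rw [erwV_eq] at hV ⊢
  rw [hPhat, hscore]
  have hA : ∑ k ∈ range n, erwMean X k ω ^ 2 ≠ 0 := right_ne_zero_of_mul hV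
  field_simp
  ring

theorem erwRemainder_nonneg {n : ℕ} : 0 ≤ erwRemainder X n ω := by
  unfold erwRemainder
  positivity

end Walk

namespace IsERW

variable {m0 : MeasurableSpace Ω} {μ : Measure Ω} {ℱ : Filtration ℕ m0} {X : ℕ → Ω → ℝ} {p : ℝ}
  {ω : Ω}

theorem abs_two_mul_sub_one_le (h : IsERW μ ℱ X p) : |2 * p - 1| ≤ 1 :=
  abs_le.2 ⟨by linarith [h.1], by linarith [h.2.1]⟩

theorem step_sq (h : IsERW μ ℱ X p) (k : ℕ) : X (k + 1) ω ^ 2 = 1 :=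
  sq_eq_one_iff.2 (h.2.2.1 (k + 1) k.succ_pos ω)

theorem abs_step (h : IsERW μ ℱ X p) (k : ℕ) : |X (k + 1) ω| = 1 :=
  (sq_eq_sq_iff_abs_eq_abs _ 1).1 ((h.step_sq k).trans (one_pow 2).symm) |>.trans abs_one

theorem abs_erwS_le (h : IsERW μ ℱ X p) (k : ℕ) : |erwS X k ω| ≤ k := by
  induction k with
  | zero => simp [erwS_zero]
  | succ k ih =>
    rw [erwS_succ]
    push_cast
    exact (abs_add_le _ _).trans (add_le_add ih (h.abs_step k).le)

theorem abs_erwMean_le_one (h : IsERW μ ℱ X p) (k : ℕ) : |erwMean X k ω| ≤ 1 := by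
  rw [erwMean, abs_div, Nat.abs_cast]
  exact div_le_one_of_le₀ (h.abs_erwS_le k) k.cast_nonneg

theorem abs_erwInnovation_le_two (h : IsERW μ ℱ X p) (k : ℕ) : |erwInnovation X p k ω| ≤ 2 := by
  refine (abs_sub _ _).trans ?_
  rw [abs_mul, h.abs_step]
  linarith [mul_le_one₀ h.abs_two_mul_sub_one_le (abs_nonneg _) (h.abs_erwMean_le_one (ω := ω) k)]

theorem measurable_step (h : IsERW μ ℱ X p) (k : ℕ) : Measurable[ℱ (k + 1)] (X (k + 1)) :=
  h.2.2.2.1 (k + 1) k.succ_pos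

theorem stronglyMeasurable_erwS (h : IsERW μ ℱ X p) (k : ℕ) :
    StronglyMeasurable[ℱ k] (erwS X k) :=
  Finset.stronglyMeasurable_fun_sum _ fun i hi => ((h.2.2.2.1 i (mem_Icc.1 hi).1).mono
    (ℱ.mono (mem_Icc.1 hi).2) le_rfl).stronglyMeasurable

theorem stronglyMeasurable_erwMean (h : IsERW μ ℱ X p) (k : ℕ) :
    StronglyMeasurable[ℱ k] (erwMean X k) :=
  ((h.stronglyMeasurable_erwS k).measurable.div_const k).stronglyMeasurable

theorem stronglyMeasurable_erwInnovation (h : IsERW μ ℱ X p) (k : ℕ) :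
    StronglyMeasurable[ℱ (k + 1)] (erwInnovation X p k) :=
  (h.measurable_step k).stronglyMeasurable.sub
    (((h.stronglyMeasurable_erwMean k).mono (ℱ.mono k.le_succ)).const_mul _)

section Integrable

variable [IsFiniteMeasure μ]

theorem integrable_erwS_pow (h : IsERW μ ℱ X p) (k i : ℕ) :
    Integrable (fun ω => erwS X k ω ^ i) μ := by
  refine Integrable.of_bound
    (((h.stronglyMeasurable_erwS k).mono (ℱ.le k)).pow i).aestronglyMeasurable ((k : ℝ) ^ i)
    (Eventually.of_forall fun ω => ?_)
  rw [norm_pow]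
  exact pow_le_pow_left₀ (norm_nonneg _) (h.abs_erwS_le k) i

theorem integrable_erwMean_pow (h : IsERW μ ℱ X p) (k i : ℕ) :
    Integrable (fun ω => erwMean X k ω ^ i) μ := by
  simpa only [erwMean, div_pow] using (h.integrable_erwS_pow k i).div_const _

theorem integrable_step (h : IsERW μ ℱ X p) (k : ℕ) : Integrable (X (k + 1)) μ :=
  Integrable.of_bound ((h.measurable_step k).mono (ℱ.le _) le_rfl).aestronglyMeasurable 1
    (Eventually.of_forall fun _ => (h.abs_step k).le)

theorem integrable_erwInnovation (h : IsERW μ ℱ X p) (k : ℕ) :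
    Integrable (erwInnovation X p k) μ := by
  have hmean := h.integrable_erwMean_pow k 1
  simp only [pow_one] at hmean
  exact (h.integrable_step k).sub (hmean.const_mul _)

theorem condExp_erwInnovation (h : IsERW μ ℱ X p) {k : ℕ} (hk : k ≠ 0) :
    μ[erwInnovation X p k | ℱ k] =ᵐ[μ] 0 := by
  have hmean := h.integrable_erwMean_pow k 1
  simp only [pow_one] at hmean
  have hmeas : StronglyMeasurable[ℱ k] fun ω => (2 * p - 1) * erwMean X k ω :=
    (h.stronglyMeasurable_erwMean k).const_mul _
  filter_upwards [condExp_sub (h.integrable_step k) (hmean.const_mul (2 * p - 1)) (ℱ k),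
    h.2.2.2.2 k (Nat.one_le_iff_ne_zero.2 hk)] with ω hsub hstep
  rw [condExp_of_stronglyMeasurable (ℱ.le k) hmeas (hmean.const_mul _)] at hsub
  exact hsub.trans (by simp [hstep, erwMean])

theorem integrable_erwMean_pow_mul (h : IsERW μ ℱ X p) (k i : ℕ) :
    Integrable (fun ω => erwMean X k ω ^ i * erwInnovation X p k ω) μ :=
  (h.integrable_erwMean_pow k i).mul_bdd (h.integrable_erwInnovation k).aestronglyMeasurable
    (Eventually.of_forall fun _ => h.abs_erwInnovation_le_two k)

theorem isMartingaleDiff_erwMean_pow_mul (h : IsERW μ ℱ X p) {i : ℕ} (hi : i ≠ 0) :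
    IsMartingaleDiff μ ℱ fun k ω => erwMean X k ω ^ i * erwInnovation X p k ω where
  stronglyMeasurable k := (((h.stronglyMeasurable_erwMean k).mono (ℱ.mono k.le_succ)).pow i).mul
    (h.stronglyMeasurable_erwInnovation k)
  integrable k := h.integrable_erwMean_pow_mul k i
  condExp_eq_zero k := by
    rcases eq_or_ne k 0 with rfl | hk
    · simp only [erwMean_zero, zero_pow hi, zero_mul]
      exact (condExp_zero (m := ℱ 0) (μ := μ)).eventuallyEq
    · filter_upwards [condExp_mul_of_stronglyMeasurable_left
        ((h.stronglyMeasurable_erwMean k).pow i) (h.integrable_erwMean_pow_mul k i)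
        (h.integrable_erwInnovation k), h.condExp_erwInnovation hk] with ω hpull hzero
      exact hpull.trans (by simp [hzero])

theorem integral_erwMean_pow_mul (h : IsERW μ ℱ X p) {i : ℕ} (hi : i ≠ 0) (k : ℕ) :
    ∫ ω, erwMean X k ω ^ i * erwInnovation X p k ω ∂μ = 0 := by
  have hdiff := h.isMartingaleDiff_erwMean_pow_mul hi
  simpa only [smul_eq_mul, mul_one] using hdiff.integral_smul_eq_zero (k := k)
    (g := fun _ => (1 : ℝ)) stronglyMeasurable_const
    (by simpa only [smul_eq_mul, mul_one] using hdiff.integrable k)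

theorem integrable_erwS_pow_mul_step (h : IsERW μ ℱ X p) (k i : ℕ) :
    Integrable (fun ω => erwS X k ω ^ i * X (k + 1) ω) μ :=
  (h.integrable_erwS_pow k i).mul_bdd (h.integrable_step k).aestronglyMeasurable
    (Eventually.of_forall fun _ => (h.abs_step k).le)

theorem integral_erwS_pow_mul_step (h : IsERW μ ℱ X p) {i : ℕ} (hi : i ≠ 0) (k : ℕ) :
    ∫ ω, erwS X k ω ^ i * X (k + 1) ω ∂μ
      = (2 * p - 1) / k * ∫ ω, erwS X k ω ^ (i + 1) ∂μ := by
  have hsplit : ∀ ω, erwS X k ω ^ i * X (k + 1) ω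
      = (k : ℝ) ^ i * (erwMean X k ω ^ i * erwInnovation X p k ω)
        + (2 * p - 1) / k * erwS X k ω ^ (i + 1) := fun ω => by
    rcases eq_or_ne k 0 with rfl | hk
    · simp [erwS_zero, hi]
    · rw [erwS_eq_mul_erwMean, erwInnovation]
      field_simp
      ring
  simp only [hsplit]
  rw [integral_add ((h.integrable_erwMean_pow_mul k i).const_mul _)
    ((h.integrable_erwS_pow k _).const_mul _), integral_const_mul, integral_const_mul,
    h.integral_erwMean_pow_mul hi, mul_zero, zero_add]

end Integrable

section Moments

variable [IsProbabilityMeasure μ]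

theorem integral_erwS_sq_succ (h : IsERW μ ℱ X p) (k : ℕ) :
    ∫ ω, erwS X (k + 1) ω ^ 2 ∂μ
      = (1 + 2 * (2 * p - 1) / k) * ∫ ω, erwS X k ω ^ 2 ∂μ + 1 := by
  have hexpand : ∀ ω, erwS X (k + 1) ω ^ 2
      = erwS X k ω ^ 2 + 2 * (erwS X k ω ^ 1 * X (k + 1) ω) + 1 := fun ω => by
    rw [erwS_succ]
    linear_combination h.step_sq (ω := ω) k
  have hcross := (h.integrable_erwS_pow_mul_step k 1).const_mul 2
  simp only [hexpand]
  rw [integral_add ((h.integrable_erwS_pow k 2).fun_add hcross) (integrable_const _),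
    integral_add (h.integrable_erwS_pow k 2) hcross, integral_const_mul,
    h.integral_erwS_pow_mul_step one_ne_zero, integral_const, probReal_univ, one_smul]
  ring

theorem integral_erwS_pow_four_succ (h : IsERW μ ℱ X p) (k : ℕ) :
    ∫ ω, erwS X (k + 1) ω ^ 4 ∂μ
      = (1 + 4 * (2 * p - 1) / k) * ∫ ω, erwS X k ω ^ 4 ∂μ
        + (6 + 4 * (2 * p - 1) / k) * ∫ ω, erwS X k ω ^ 2 ∂μ + 1 := by
  have hexpand : ∀ ω, erwS X (k + 1) ω ^ 4
      = erwS X k ω ^ 4 + 4 * (erwS X k ω ^ 3 * X (k + 1) ω) + 6 * erwS X k ω ^ 2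
        + 4 * (erwS X k ω ^ 1 * X (k + 1) ω) + 1 := fun ω => by
    rw [erwS_succ]
    linear_combination (6 * erwS X k ω ^ 2 + 4 * erwS X k ω * X (k + 1) ω
      + X (k + 1) ω ^ 2 + 1) * h.step_sq (ω := ω) k
  have hfour := h.integrable_erwS_pow k 4
  have hcube := (h.integrable_erwS_pow_mul_step k 3).const_mul 4
  have hsq := (h.integrable_erwS_pow k 2).const_mul 6
  have hcross := (h.integrable_erwS_pow_mul_step k 1).const_mul 4
  simp only [hexpand]
  rw [integral_add (((hfour.fun_add hcube).fun_add hsq).fun_add hcross) (integrable_const _),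
    integral_add ((hfour.fun_add hcube).fun_add hsq) hcross, integral_add (hfour.fun_add hcube) hsq,
    integral_add hfour hcube, integral_const_mul, integral_const_mul, integral_const_mul,
    h.integral_erwS_pow_mul_step three_ne_zero, h.integral_erwS_pow_mul_step one_ne_zero,
    integral_const, probReal_univ, one_smul]
  ring

theorem exists_integral_erwS_sq_le (h : IsERW μ ℱ X p) (hp : p < 3 / 4) :
    ∃ C, 1 ≤ C ∧ ∀ k : ℕ, ∫ ω, erwS X k ω ^ 2 ∂μ ≤ C * k := by
  have hβ : max (2 * (2 * p - 1)) 0 < 1 := max_lt (by linarith) one_pos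
  refine ⟨1 / (1 - max (2 * (2 * p - 1)) 0), ?_, fun k => ?_⟩
  · rw [one_le_div (by linarith)]
    linarith [le_max_right (2 * (2 * p - 1)) 0]
  · have hle := le_div_one_sub_mul_pow (i := 1) (r := 1) (le_max_right _ _) hβ zero_le_one
      (u := fun k => ∫ ω, erwS X k ω ^ 2 ∂μ) (by simp [erwS_zero]) (fun k => ?_) k
    · simpa only [pow_one] using hle
    · rw [h.integral_erwS_sq_succ]
      have hm : 0 ≤ ∫ ω, erwS X k ω ^ 2 ∂μ := integral_nonneg fun _ => sq_nonneg _
      norm_num only [Nat.cast_one, one_mul, pow_one]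
      refine add_le_add (mul_le_mul_of_nonneg_right ?_ hm) (by linarith)
      gcongr
      exact le_max_left _ _

theorem exists_integral_erwS_pow_four_le (h : IsERW μ ℱ X p) (hp : p < 3 / 4) :
    ∃ D, 0 ≤ D ∧ ∀ k : ℕ, ∫ ω, erwS X k ω ^ 4 ∂μ ≤ D * k ^ 2 := by
  obtain ⟨C, hC, hsq⟩ := h.exists_integral_erwS_sq_le hp
  set β := max (2 * (2 * p - 1)) 0
  have hβ0 : 0 ≤ β := le_max_right _ _
  have hβ : β < 1 := max_lt (by linarith) one_pos
  refine ⟨3 * C / (1 - β), div_nonneg (by linarith) (by linarith),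
    le_div_one_sub_mul_pow hβ0 hβ (by linarith) (by simp [erwS_zero]) fun k => ?_⟩
  rw [h.integral_erwS_pow_four_succ]
  have hq : 0 ≤ ∫ ω, erwS X k ω ^ 4 ∂μ := integral_nonneg fun _ => by positivity
  have hm : 0 ≤ ∫ ω, erwS X k ω ^ 2 ∂μ := integral_nonneg fun _ => sq_nonneg _
  have hcoef : 4 * (2 * p - 1) / k ≤ 2 * β / k := by
    refine div_le_div_of_nonneg_right ?_ k.cast_nonneg
    linarith [le_max_left (2 * (2 * p - 1)) 0]
  have hlin : 2 * β / k * ∫ ω, erwS X k ω ^ 2 ∂μ ≤ 2 * C := by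
    calc 2 * β / k * ∫ ω, erwS X k ω ^ 2 ∂μ ≤ 2 * β / k * (C * k) := by gcongr; exact hsq k
      _ = 2 * β * C * (k / k) := by ring
      _ ≤ 2 * 1 * C * 1 := by gcongr; exact div_self_le_one _
      _ = 2 * C := by ring
  have hq' := mul_le_mul_of_nonneg_right hcoef hq
  have hm' := mul_le_mul_of_nonneg_right hcoef hm
  push_cast
  linarith [hsq k]

end Moments

theorem erwMean_mul_erwInnovation_sq_sub (h : IsERW μ ℱ X p) (k : ℕ) :
    (erwMean X k ω * erwInnovation X p k ω) ^ 2 - erwMean X k ω ^ 2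
      = -2 * (2 * p - 1) * (erwMean X k ω ^ 3 * erwInnovation X p k ω)
        - (2 * p - 1) ^ 2 * erwMean X k ω ^ 4 := by
  rw [erwInnovation]
  linear_combination erwMean X k ω ^ 2 * h.step_sq (ω := ω) k

theorem erwMean_sq_eq (h : IsERW μ ℱ X p) {k : ℕ} (hk : k ≠ 0) :
    (3 - 4 * p) * erwMean X k ω ^ 2
      = (k : ℝ)⁻¹ + 2 * (erwMean X k ω * erwInnovation X p k ω)
        + ((k + 1) * erwMean X k ω ^ 2 - (k + 2) * erwMean X (k + 1) ω ^ 2)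
        - erwMean X (k + 1) ω ^ 2 / k := by
  have hX : X (k + 1) ω = (k + 1) * erwMean X (k + 1) ω - k * erwMean X k ω := by
    have hS := erwS_succ (X := X) (ω := ω) k
    rw [erwS_eq_mul_erwMean, erwS_eq_mul_erwMean] at hS
    push_cast at hS
    linarith
  have hsq := h.step_sq (ω := ω) k
  rw [hX] at hsq
  rw [erwInnovation, hX]
  field_simp
  linear_combination hsq

theorem erwMean_one_sq (h : IsERW μ ℱ X p) : erwMean X 1 ω ^ 2 = 1 := by
  simpa [erwMean, erwS] using h.step_sq (ω := ω) 0

theorem erwMean_pow_six_le (h : IsERW μ ℱ X p) (k : ℕ) : erwMean X k ω ^ 6 ≤ erwMean X k ω ^ 4 := by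
  rw [← (by decide : Even 6).pow_abs, ← (by decide : Even 4).pow_abs]
  exact pow_le_pow_of_le_one (abs_nonneg _) (h.abs_erwMean_le_one k) (by norm_num)

theorem abs_sum_sq_sub_erwV_le (h : IsERW μ ℱ X p) (n : ℕ) :
    |∑ k ∈ range n, (erwMean X k ω * erwInnovation X p k ω) ^ 2 - erwV X n ω / 4|
      ≤ 2 * |∑ k ∈ range n, erwMean X k ω ^ 3 * erwInnovation X p k ω|
        + ∑ k ∈ range n, erwMean X k ω ^ 4 := by
  have ha := h.abs_two_mul_sub_one_le
  have hquartic : 0 ≤ ∑ k ∈ range n, erwMean X k ω ^ 4 := sum_nonneg fun k _ => by positivity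
  have hsplit : ∑ k ∈ range n, (erwMean X k ω * erwInnovation X p k ω) ^ 2 - erwV X n ω / 4
      = -2 * (2 * p - 1) * ∑ k ∈ range n, erwMean X k ω ^ 3 * erwInnovation X p k ω
        - (2 * p - 1) ^ 2 * ∑ k ∈ range n, erwMean X k ω ^ 4 := by
    rw [erwV_eq, mul_div_cancel_left₀ _ four_ne_zero, ← sum_sub_distrib, mul_sum, mul_sum,
      ← sum_sub_distrib]
    exact sum_congr rfl fun k _ => h.erwMean_mul_erwInnovation_sq_sub k
  rw [hsplit]
  refine (abs_sub _ _).trans (add_le_add ?_ ?_)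
  · rw [abs_mul, abs_mul, abs_neg, abs_two]
    exact mul_le_mul_of_nonneg_right (mul_le_of_le_one_right zero_le_two ha) (abs_nonneg _)
  · rw [abs_mul, abs_pow, abs_of_nonneg hquartic]
    exact mul_le_of_le_one_left hquartic (pow_le_one₀ (abs_nonneg _) ha)

theorem mul_erwV_eq (h : IsERW μ ℱ X p) {n : ℕ} (hn : n ≠ 0) :
    (3 - 4 * p) / 4 * erwV X n ω = ∑ k ∈ range n, (k : ℝ)⁻¹ + 2 * erwScore X p n ω + 2
      - erwRemainder X n ω := by
  rw [erwV_eq, erwScore, erwRemainder]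
  induction n, Nat.one_le_iff_ne_zero.2 hn using Nat.le_induction with
  | base =>
    simp [erwMean_zero, h.erwMean_one_sq]
    norm_num
  | succ n hle ih =>
    have hn0 : n ≠ 0 := Nat.one_le_iff_ne_zero.1 hle
    simp only [sum_range_succ]
    push_cast
    linear_combination ih hn0 + h.erwMean_sq_eq (ω := ω) hn0

theorem abs_erwV_sub_log_le (h : IsERW μ ℱ X p) (hp : p < 3 / 4) {n : ℕ} (hn : n ≠ 0) :
    |erwV X n ω - 4 / (3 - 4 * p) * Real.log n|
      ≤ 4 / (3 - 4 * p) * (2 * |erwScore X p n ω| + (3 + erwRemainder X n ω)) := by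
  have hp0 : 0 < 3 - 4 * p := by linarith
  have hV : erwV X n ω - 4 / (3 - 4 * p) * Real.log n = 4 / (3 - 4 * p) * (∑ k ∈ range n, (k : ℝ)⁻¹
      - Real.log n + 2 * erwScore X p n ω + 2 - erwRemainder X n ω) := by
    rw [show erwV X n ω = 4 / (3 - 4 * p) * ((3 - 4 * p) / 4 * erwV X n ω) by field_simp,
      h.mul_erwV_eq hn]
    ring
  rw [hV, abs_mul, abs_of_pos (by positivity : 0 < 4 / (3 - 4 * p))]
  gcongr
  have hharmonic := abs_le.1 (abs_sum_range_inv_sub_log_le hn)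
  have hrem := erwRemainder_nonneg (X := X) (n := n) (ω := ω)
  rw [abs_le]
  constructor <;> linarith [neg_abs_le (erwScore X p n ω), le_abs_self (erwScore X p n ω)]

theorem erwV_pos (h : IsERW μ ℱ X p) {n : ℕ} (hn : 2 ≤ n) : 0 < erwV X n ω := by
  have hle := single_le_sum (f := fun k => erwMean X k ω ^ 2) (fun _ _ => sq_nonneg _)
    (mem_range.2 hn)
  rw [h.erwMean_one_sq] at hle
  rw [erwV_eq]
  linarith

theorem memLp_erwMean_pow_mul [IsFiniteMeasure μ] (h : IsERW μ ℱ X p) (k i : ℕ) :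
    MemLp (fun ω => erwMean X k ω ^ i * erwInnovation X p k ω) 2 μ := by
  refine MemLp.of_bound (h.integrable_erwMean_pow_mul k i).aestronglyMeasurable 2
    (Eventually.of_forall fun ω => ?_)
  rw [norm_mul, norm_pow]
  exact (mul_le_of_le_one_left (norm_nonneg _)
    (pow_le_one₀ (norm_nonneg _) (h.abs_erwMean_le_one k))).trans (h.abs_erwInnovation_le_two k)

theorem memLp_erwMean_mul [IsFiniteMeasure μ] (h : IsERW μ ℱ X p) (k : ℕ) :
    MemLp (fun ω => erwMean X k ω * erwInnovation X p k ω) 2 μ := by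
  simpa only [pow_one] using h.memLp_erwMean_pow_mul k 1

theorem integrable_sum_sq [IsFiniteMeasure μ] (h : IsERW μ ℱ X p) (n : ℕ) :
    Integrable (fun ω => ∑ k ∈ range n, (erwMean X k ω * erwInnovation X p k ω) ^ 2) μ :=
  integrable_finsetSum _ fun k _ => (h.memLp_erwMean_mul k).integrable_sq

theorem integrable_erwV [IsFiniteMeasure μ] (h : IsERW μ ℱ X p) (n : ℕ) :
    Integrable (erwV X n) μ := by
  rw [show erwV X n = _ from funext fun _ => erwV_eq n]
  exact (integrable_finsetSum _ fun k _ => h.integrable_erwMean_pow k 2).const_mul 4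

theorem integrable_erwRemainder [IsFiniteMeasure μ] (h : IsERW μ ℱ X p) (n : ℕ) :
    Integrable (erwRemainder X n) μ :=
  ((h.integrable_erwMean_pow n 2).const_mul _).add
    (integrable_finsetSum _ fun k _ => (h.integrable_erwMean_pow (k + 1) 2).div_const _)

theorem isMartingaleDiff_erwMean_mul [IsFiniteMeasure μ] (h : IsERW μ ℱ X p) :
    IsMartingaleDiff μ ℱ fun k ω => erwMean X k ω * erwInnovation X p k ω := by
  simpa only [pow_one] using h.isMartingaleDiff_erwMean_pow_mul one_ne_zero

theorem integrable_erwScore [IsFiniteMeasure μ] (h : IsERW μ ℱ X p) (n : ℕ) :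
    Integrable (erwScore X p n) μ :=
  integrable_finsetSum _ fun k _ => h.isMartingaleDiff_erwMean_mul.integrable k

theorem sqrt_log_mul_erwPhat_sub (h : IsERW μ ℱ X p) (n : ℕ) :
    √(Real.log n) * (erwPhat X n ω - p)
      = erwScore X p n ω / √(Real.log n) * (2 / (erwV X n ω / Real.log n)) := by
  rcases lt_or_ge n 2 with hn | hn
  · interval_cases n <;> simp
  · have hV : erwV X n ω ≠ 0 := (h.erwV_pos hn).ne'
    have hlog : 0 < Real.log n := Real.log_pos (Nat.one_lt_cast.2 hn)
    rw [erwPhat_sub_eq hV]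
    have hsqrt : √(Real.log n) ≠ 0 := (Real.sqrt_pos.2 hlog).ne'
    have hsq := Real.sq_sqrt hlog.le
    field_simp
    rw [hsq, mul_comm]

section Asymptotics

variable [IsProbabilityMeasure μ]

theorem exists_integral_erwMean_sq_le (h : IsERW μ ℱ X p) (hp : p < 3 / 4) :
    ∃ C, 1 ≤ C ∧ ∀ k : ℕ, ∫ ω, erwMean X k ω ^ 2 ∂μ ≤ C * (k : ℝ)⁻¹ := by
  obtain ⟨C, hC, hle⟩ := h.exists_integral_erwS_sq_le hp
  refine ⟨C, hC, fun k => ?_⟩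
  simp only [erwMean, div_pow, integral_div]
  calc (∫ ω, erwS X k ω ^ 2 ∂μ) / k ^ 2 ≤ C * k / k ^ 2 := by gcongr; exact hle k
    _ = C * (k : ℝ)⁻¹ := by
      rcases eq_or_ne k 0 with rfl | hk
      · simp
      · field_simp

theorem exists_integral_erwMean_pow_four_le (h : IsERW μ ℱ X p) (hp : p < 3 / 4) :
    ∃ D, 0 ≤ D ∧ ∀ k : ℕ, ∫ ω, erwMean X k ω ^ 4 ∂μ ≤ D * ((k : ℝ) ^ 2)⁻¹ := by
  obtain ⟨D, hD, hle⟩ := h.exists_integral_erwS_pow_four_le hp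
  refine ⟨D, hD, fun k => ?_⟩
  simp only [erwMean, div_pow, integral_div]
  calc (∫ ω, erwS X k ω ^ 4 ∂μ) / k ^ 4 ≤ D * k ^ 2 / k ^ 4 := by gcongr; exact hle k
    _ = D * ((k : ℝ) ^ 2)⁻¹ := by
      rcases eq_or_ne k 0 with rfl | hk
      · simp
      · field_simp

theorem integral_abs_sum_erwMean_pow_mul_le (h : IsERW μ ℱ X p) {i : ℕ} (hi : i ≠ 0) (n : ℕ) :
    ∫ ω, |∑ k ∈ range n, erwMean X k ω ^ i * erwInnovation X p k ω| ∂μ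
      ≤ 2 * √(∑ k ∈ range n, ∫ ω, erwMean X k ω ^ (2 * i) ∂μ) := by
  refine (integral_abs_le_sqrt_integral_sq
    (memLp_finsetSum _ fun k _ => h.memLp_erwMean_pow_mul k i)).trans ?_
  rw [(h.isMartingaleDiff_erwMean_pow_mul hi).integral_sq_sum (h.memLp_erwMean_pow_mul · i),
    ← Real.sqrt_sq (zero_le_two (α := ℝ)), ← Real.sqrt_mul (sq_nonneg 2), mul_sum]
  gcongr with k
  rw [← integral_const_mul]
  refine integral_mono (h.memLp_erwMean_pow_mul k i).integrable_sq
    ((h.integrable_erwMean_pow k _).const_mul _) fun ω => ?_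
  rw [mul_pow, ← pow_mul, mul_comm i 2, mul_comm]
  have heven : 0 ≤ erwMean X k ω ^ (2 * i) := (even_two_mul i).pow_nonneg _
  exact mul_le_mul_of_nonneg_right
    (sq_le_sq' (abs_le.1 (h.abs_erwInnovation_le_two k)).1 (le_of_abs_le
      (h.abs_erwInnovation_le_two k))) heven

theorem exists_integral_abs_erwScore_le (h : IsERW μ ℱ X p) (hp : p < 3 / 4) :
    ∃ c, ∀ n : ℕ, n ≠ 0 → ∫ ω, |erwScore X p n ω| ∂μ ≤ c * √(1 + Real.log n) := by
  obtain ⟨C, hC, hmean⟩ := h.exists_integral_erwMean_sq_le hp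
  refine ⟨2 * √C, fun n hn => ?_⟩
  have hL1 := h.integral_abs_sum_erwMean_pow_mul_le one_ne_zero n
  simp only [pow_one, mul_one] at hL1
  rw [mul_assoc, ← Real.sqrt_mul (by linarith)]
  refine hL1.trans ?_
  gcongr
  calc ∑ k ∈ range n, ∫ ω, erwMean X k ω ^ 2 ∂μ ≤ ∑ k ∈ range n, C * (k : ℝ)⁻¹ :=
        sum_le_sum fun k _ => hmean k
    _ ≤ C * (1 + Real.log n) := by
      rw [← mul_sum]
      gcongr
      linarith [(abs_le.1 (abs_sum_range_inv_sub_log_le hn)).2]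

theorem exists_integral_erwRemainder_le (h : IsERW μ ℱ X p) (hp : p < 3 / 4) :
    ∃ R, 0 ≤ R ∧ ∀ n : ℕ, ∫ ω, erwRemainder X n ω ∂μ ≤ R := by
  obtain ⟨C, hC, hmean⟩ := h.exists_integral_erwMean_sq_le hp
  refine ⟨C * (2 + ∑' k : ℕ, ((k : ℝ) ^ 2)⁻¹), by positivity, fun n => ?_⟩
  have hboundary : (n + 1) * ∫ ω, erwMean X n ω ^ 2 ∂μ ≤ C * 2 := by
    have hn : (n + 1) * (n : ℝ)⁻¹ ≤ 2 := by
      rcases eq_or_ne n 0 with rfl | hn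
      · simp
      · rw [← div_eq_mul_inv, div_le_iff₀ (by positivity)]
        linarith [Nat.one_le_cast (α := ℝ).2 (Nat.one_le_iff_ne_zero.2 hn)]
    calc (n + 1) * ∫ ω, erwMean X n ω ^ 2 ∂μ ≤ (n + 1) * (C * (n : ℝ)⁻¹) := by
          gcongr
          exact hmean n
      _ = C * ((n + 1) * (n : ℝ)⁻¹) := by ring
      _ ≤ C * 2 := by gcongr
  have hterm : ∀ k : ℕ, ∫ ω, erwMean X (k + 1) ω ^ 2 / k ∂μ ≤ C * ((k : ℝ) ^ 2)⁻¹ := fun k => by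
    rcases eq_or_ne k 0 with rfl | hk
    · simp
    calc ∫ ω, erwMean X (k + 1) ω ^ 2 / k ∂μ = (∫ ω, erwMean X (k + 1) ω ^ 2 ∂μ) / k :=
          integral_div _ _
      _ ≤ C * ((k + 1 : ℕ) : ℝ)⁻¹ / k := by gcongr; exact hmean (k + 1)
      _ ≤ C * (k : ℝ)⁻¹ / k := by gcongr; exact k.le_succ
      _ = C * ((k : ℝ) ^ 2)⁻¹ := by field_simp
  have hint : ∀ k ∈ range n, Integrable (fun ω => erwMean X (k + 1) ω ^ 2 / k) μ := fun k _ =>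
    (h.integrable_erwMean_pow (k + 1) 2).div_const _
  simp only [erwRemainder]
  rw [integral_add ((h.integrable_erwMean_pow n 2).const_mul _) (integrable_finsetSum _ hint),
    integral_const_mul, integral_finsetSum _ hint, mul_add]
  refine add_le_add hboundary ((sum_le_sum fun k _ => hterm k).trans ?_)
  rw [← mul_sum]
  gcongr
  exact sum_range_inv_sq_le_tsum n

theorem exists_integral_abs_erwV_sub_log_le (h : IsERW μ ℱ X p) (hp : p < 3 / 4) :
    ∃ c, ∀ n : ℕ, n ≠ 0 →
      ∫ ω, |erwV X n ω - 4 / (3 - 4 * p) * Real.log n| ∂μ ≤ c * √(1 + Real.log n) := by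
  obtain ⟨c, hscore⟩ := h.exists_integral_abs_erwScore_le hp
  obtain ⟨R, hR, hrem⟩ := h.exists_integral_erwRemainder_le hp
  have hp0 : 0 < 3 - 4 * p := by linarith
  refine ⟨4 / (3 - 4 * p) * (2 * c + (3 + R)), fun n hn => ?_⟩
  have hsqrt : 1 ≤ √(1 + Real.log n) := Real.one_le_sqrt.2 (by linarith [Real.log_natCast_nonneg n])
  have hM := (h.integrable_erwScore n).abs.const_mul 2
  have hr := (integrable_const (3 : ℝ)).fun_add (h.integrable_erwRemainder n)
  calc ∫ ω, |erwV X n ω - 4 / (3 - 4 * p) * Real.log n| ∂μ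
      ≤ ∫ ω, 4 / (3 - 4 * p) * (2 * |erwScore X p n ω| + (3 + erwRemainder X n ω)) ∂μ :=
        integral_mono ((h.integrable_erwV n).sub (integrable_const _)).abs
          ((hM.fun_add hr).const_mul _) fun ω => h.abs_erwV_sub_log_le hp hn
    _ = 4 / (3 - 4 * p) * (2 * ∫ ω, |erwScore X p n ω| ∂μ + (3 + ∫ ω, erwRemainder X n ω ∂μ)) := by
      rw [integral_const_mul, integral_add hM hr, integral_const_mul,
        integral_add (integrable_const _) (h.integrable_erwRemainder n), integral_const,
        probReal_univ, one_smul]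
    _ ≤ 4 / (3 - 4 * p) * (2 * (c * √(1 + Real.log n)) + (3 + R) * √(1 + Real.log n)) := by
      gcongr
      · exact hscore n hn
      · exact (add_le_add_right (hrem n) 3).trans (le_mul_of_one_le_right (by linarith) hsqrt)
    _ = 4 / (3 - 4 * p) * (2 * c + (3 + R)) * √(1 + Real.log n) := by ring

theorem exists_integral_abs_sum_sq_sub_erwV_le (h : IsERW μ ℱ X p) (hp : p < 3 / 4) :
    ∃ c, ∀ n : ℕ, ∫ ω, |∑ k ∈ range n, (erwMean X k ω * erwInnovation X p k ω) ^ 2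
      - erwV X n ω / 4| ∂μ ≤ c := by
  obtain ⟨D, hD, hfour⟩ := h.exists_integral_erwMean_pow_four_le hp
  set B := D * ∑' k : ℕ, ((k : ℝ) ^ 2)⁻¹
  have hquartic : ∀ n, ∑ k ∈ range n, ∫ ω, erwMean X k ω ^ 4 ∂μ ≤ B := fun n => by
    refine (sum_le_sum fun k _ => hfour k).trans ?_
    rw [← mul_sum]
    exact mul_le_mul_of_nonneg_left (sum_range_inv_sq_le_tsum n) hD
  have hcubic : ∀ n, ∫ ω, |∑ k ∈ range n, erwMean X k ω ^ 3 * erwInnovation X p k ω| ∂μ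
      ≤ 2 * √B := fun n => by
    refine (h.integral_abs_sum_erwMean_pow_mul_le three_ne_zero n).trans ?_
    gcongr
    refine (sum_le_sum fun k _ => ?_).trans (hquartic n)
    exact integral_mono (h.integrable_erwMean_pow k _) (h.integrable_erwMean_pow k 4) fun ω =>
      h.erwMean_pow_six_le k
  refine ⟨2 * (2 * √B) + B, fun n => ?_⟩
  have hint₃ : Integrable
      (fun ω => 2 * |∑ k ∈ range n, erwMean X k ω ^ 3 * erwInnovation X p k ω|) μ :=
    (integrable_finsetSum _ fun k _ => h.integrable_erwMean_pow_mul k 3).abs.const_mul 2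
  have hint₄ : ∀ k ∈ range n, Integrable (fun ω => erwMean X k ω ^ 4) μ := fun k _ =>
    h.integrable_erwMean_pow k 4
  calc ∫ ω, |∑ k ∈ range n, (erwMean X k ω * erwInnovation X p k ω) ^ 2 - erwV X n ω / 4| ∂μ
      ≤ ∫ ω, (2 * |∑ k ∈ range n, erwMean X k ω ^ 3 * erwInnovation X p k ω|
          + ∑ k ∈ range n, erwMean X k ω ^ 4) ∂μ :=
        integral_mono
          ((h.integrable_sum_sq n).sub ((h.integrable_erwV n).div_const 4)).abs
          (hint₃.fun_add (integrable_finsetSum _ hint₄)) fun ω => h.abs_sum_sq_sub_erwV_le n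
    _ = 2 * ∫ ω, |∑ k ∈ range n, erwMean X k ω ^ 3 * erwInnovation X p k ω| ∂μ
          + ∑ k ∈ range n, ∫ ω, erwMean X k ω ^ 4 ∂μ := by
      rw [integral_add hint₃ (integrable_finsetSum _ hint₄), integral_const_mul,
        integral_finsetSum _ hint₄]
    _ ≤ 2 * (2 * √B) + B := by gcongr; exacts [hcubic n, hquartic n]

theorem tendstoInMeasure_erwV_div_log (h : IsERW μ ℱ X p) (hp : p < 3 / 4) :
    TendstoInMeasure μ (fun n ω => erwV X n ω / Real.log n) atTop fun _ => 4 / (3 - 4 * p) := by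
  obtain ⟨c, hc⟩ := h.exists_integral_abs_erwV_sub_log_le hp
  exact tendstoInMeasure_div_log h.integrable_erwV hc

theorem tendstoInMeasure_sum_sq_div_log (h : IsERW μ ℱ X p) (hp : p < 3 / 4) :
    TendstoInMeasure μ
      (fun n ω => (∑ k ∈ range n, (erwMean X k ω * erwInnovation X p k ω) ^ 2) / Real.log n) atTop
      fun _ => 1 / (3 - 4 * p) := by
  obtain ⟨c, hc⟩ := h.exists_integral_abs_erwV_sub_log_le hp
  obtain ⟨d, hd⟩ := h.exists_integral_abs_sum_sq_sub_erwV_le hp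
  refine tendstoInMeasure_div_log (c := d + c / 4) h.integrable_sum_sq fun n hn => ?_
  have hd0 : 0 ≤ d := (integral_nonneg fun _ => abs_nonneg _).trans (hd n)
  have hsqrt : 1 ≤ √(1 + Real.log n) := Real.one_le_sqrt.2 (by linarith [Real.log_natCast_nonneg n])
  set Q : Ω → ℝ := fun ω => ∑ k ∈ range n, (erwMean X k ω * erwInnovation X p k ω) ^ 2
  have hQV := ((h.integrable_sum_sq n).sub ((h.integrable_erwV n).div_const 4)).abs
  have hV := ((h.integrable_erwV n).sub (integrable_const (4 / (3 - 4 * p) * Real.log n))).abs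
  calc ∫ ω, |Q ω - 1 / (3 - 4 * p) * Real.log n| ∂μ
      ≤ ∫ ω, (|Q ω - erwV X n ω / 4| + |erwV X n ω - 4 / (3 - 4 * p) * Real.log n| / 4) ∂μ := by
        refine integral_mono ((h.integrable_sum_sq n).sub (integrable_const _)).abs
          (hQV.add (hV.div_const 4)) fun ω =>
            (abs_sub_le _ (erwV X n ω / 4) _).trans_eq (congrArg _ ?_)
        rw [show erwV X n ω / 4 - 1 / (3 - 4 * p) * Real.log n
          = (erwV X n ω - 4 / (3 - 4 * p) * Real.log n) / 4 by ring, abs_div,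
          abs_of_pos (four_pos (α := ℝ))]
    _ = ∫ ω, |Q ω - erwV X n ω / 4| ∂μ
          + (∫ ω, |erwV X n ω - 4 / (3 - 4 * p) * Real.log n| ∂μ) / 4 := by
      rw [← integral_div]
      exact integral_add hQV (hV.div_const 4)
    _ ≤ d * √(1 + Real.log n) + c * √(1 + Real.log n) / 4 :=
      add_le_add ((hd n).trans (le_mul_of_one_le_right hd0 hsqrt))
        (div_le_div_of_nonneg_right (hc n hn) zero_le_four)
    _ = (d + c / 4) * √(1 + Real.log n) := by ring

theorem tendstoInDistribution_erwScore_div_sqrt_log (h : IsERW μ ℱ X p) (hp : p < 3 / 4) :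
    TendstoInDistribution (fun n ω => erwScore X p n ω / √(Real.log n)) atTop (id : ℝ → ℝ)
      (fun _ => μ) (gaussianReal 0 (1 / (3 - 4 * p)).toNNReal) := by
  have hδ : Tendsto (fun n : ℕ => (√(Real.log n))⁻¹ * 2) atTop (𝓝 0) := by
    simpa only [Function.comp_def, Pi.inv_apply, zero_mul] using
      (Real.tendsto_sqrt_atTop.comp tendsto_log_natCast_atTop).inv_tendsto_atTop.mul_const 2
  have hclt := tendstoInDistribution_sum_of_isMartingaleDiff (N := fun n => n)
    (fun n => h.isMartingaleDiff_erwMean_mul.const_mul (√(Real.log n))⁻¹) hδ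
    (fun n k ω => ?_) (v := (1 / (3 - 4 * p)).toNNReal) ?_
  · simpa only [erwScore, div_eq_inv_mul, mul_sum] using hclt
  · rw [abs_mul, abs_mul, abs_of_nonneg (by positivity : 0 ≤ (√(Real.log n))⁻¹)]
    gcongr
    exact (mul_le_of_le_one_left (abs_nonneg _) (h.abs_erwMean_le_one k)).trans
      (h.abs_erwInnovation_le_two k)
  · rw [Real.coe_toNNReal _ (one_div_nonneg.2 (by linarith))]
    have hscale : ∀ (n : ℕ) ω, ∑ k ∈ range n,
        ((√(Real.log n))⁻¹ * (erwMean X k ω * erwInnovation X p k ω)) ^ 2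
          = (∑ k ∈ range n, (erwMean X k ω * erwInnovation X p k ω) ^ 2) / Real.log n :=
      fun n ω => by
        simp only [mul_pow, inv_pow, Real.sq_sqrt (Real.log_natCast_nonneg n)]
        rw [← mul_sum, div_eq_inv_mul]
    simpa only [hscale] using h.tendstoInMeasure_sum_sq_div_log hp

theorem tendstoInDistribution_sqrt_log_mul_erwPhat_sub (h : IsERW μ ℱ X p) (hp : p < 3 / 4) :
    TendstoInDistribution (fun (n : ℕ) ω => √(Real.log n) * (erwPhat X n ω - p)) atTop
      (fun z : ℝ => z * (2 / (4 / (3 - 4 * p)))) (fun _ => μ)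
      (gaussianReal 0 (1 / (3 - 4 * p)).toNNReal) := by
  have hI : (4 / (3 - 4 * p)) ≠ 0 := (div_pos four_pos (by linarith)).ne'
  have hV := tendstoInMeasure_comp_const (h.tendstoInMeasure_erwV_div_log hp)
    (continuousAt_const.div continuousAt_id hI : ContinuousAt (fun x : ℝ => 2 / x) _)
  simp only [h.sqrt_log_mul_erwPhat_sub]
  exact (h.tendstoInDistribution_erwScore_div_sqrt_log hp)
    |>.continuous_comp_prodMk_of_tendstoInMeasure_const (g := fun z : ℝ × ℝ => z.1 * z.2)
      (by fun_prop) hV fun n =>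
        ((h.integrable_erwV n).aestronglyMeasurable.aemeasurable.div_const _).const_div 2

end Asymptotics

end IsERW

/-- In the diffusive regime `0 ≤ p < 3/4`, `√(log n) (p̂_n - p)` converges in distribution
to the centered Gaussian law of variance `(3 - 4p)/4`. -/
theorem erw_clt_diffusive
    {m0 : MeasurableSpace Ω} (μ : Measure Ω) [IsProbabilityMeasure μ]
    (ℱ : Filtration ℕ m0) (X : ℕ → Ω → ℝ) (p : ℝ)
    (hERW : IsERW μ ℱ X p) (hp : p < 3 / 4) :
    ∀ f : ℝ →ᵇ ℝ,
      Tendsto (fun n : ℕ => ∫ ω, f (Real.sqrt (Real.log n) * (erwPhat X n ω - p)) ∂μ)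
        atTop (𝓝 (∫ x, f x ∂(gaussianReal 0 (((3 - 4 * p) / 4).toNNReal)))) := by
  intro f
  have hpos : 0 < 3 - 4 * p := by linarith
  have hlaw : (gaussianReal 0 (1 / (3 - 4 * p)).toNNReal).map (· * (2 / (4 / (3 - 4 * p))))
      = gaussianReal 0 ((3 - 4 * p) / 4).toNNReal := by
    rw [gaussianReal_map_mul_const, mul_zero]
    congr 1
    ext
    rw [NNReal.coe_mul, NNReal.coe_mk, Real.coe_toNNReal _ (by positivity),
      Real.coe_toNNReal _ (by positivity)]
    field_simp
    norm_num
  rw [← hlaw]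
  exact tendsto_integral_of_tendstoInDistribution
    (hERW.tendstoInDistribution_sqrt_log_mul_erwPhat_sub hp) f
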